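/- arXiv:2504.03211 — 2 statements merged into one kernel-verified Lean document; each statement's English description precedes it below -/
import Mathlib

section
/- For any ε ≥ 0, t ≥ 1, and indirect utilities U_1,…,U_n : [0,1] → [0,∞), the supremum of V(f) over all finitely supported (ε,ℓ_t)-calibrated predictors f equals OPT(LP-TwoStep+), the optimal value of the program LP-TwoStep+; moreover every feasible bi-event post-processing plan χ generates a finitely supported (ε,ℓ_t)-calibrated predictor f with V(f) equal to the objective value of χ in LP-TwoStep+. -/
open Finset

noncomputable section

namespace PersuasiveCalibration

/-- The environment of the persuasive calibration problem: `n` events with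
probabilities `lam i > 0` summing to one and sorted expected outcomes `theta i ∈ [0,1]`. -/
structure Setup (n : ℕ) : Type where
  lam : Fin n → ℝ
  theta : Fin n → ℝ
  lam_pos : ∀ i, 0 < lam i
  lam_sum : ∑ i, lam i = 1
  theta_mono : Monotone theta
  theta_mem : ∀ i, theta i ∈ Set.Icc (0 : ℝ) 1

variable {n : ℕ}

/-- A finitely supported probability distribution on `[0,1]`. -/
def IsDist (μ : ℝ →₀ ℝ) : Prop :=
  (∀ p, 0 ≤ μ p) ∧ (∀ p ∈ μ.support, p ∈ Set.Icc (0 : ℝ) 1) ∧ (∑ p ∈ μ.support, μ p) = 1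

/-- A predictor assigns to each event a finitely supported probability distribution on `[0,1]`. -/
def IsPredictor (f : Fin n → ℝ →₀ ℝ) : Prop := ∀ i, IsDist (f i)

/-- The (unconditional) prediction space of a predictor. -/
def suppF (f : Fin n → ℝ →₀ ℝ) : Finset ℝ := Finset.univ.biUnion fun i => (f i).support

/-- The marginalized predictor `f(p) = ∑ i, λ i * f i p`. -/
def marginal (S : Setup n) (f : Fin n → ℝ →₀ ℝ) (p : ℝ) : ℝ := ∑ i, S.lam i * f i p

/-- The true expected outcome conditional on the prediction `p`. -/
def kappa (S : Setup n) (f : Fin n → ℝ →₀ ℝ) (p : ℝ) : ℝ :=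
  (∑ i, S.lam i * f i p * S.theta i) / marginal S f p

/-- The `ℓ_t`-norm expected calibration error of a predictor. -/
def ECE (S : Setup n) (t : ℝ) (f : Fin n → ℝ →₀ ℝ) : ℝ :=
  (∑ p ∈ suppF f, marginal S f p * |kappa S f p - p| ^ t) ^ (1 / t)

/-- The principal's expected payoff from predictor `f` with indirect utilities `U i`. -/
def payoff (S : Setup n) (U : Fin n → ℝ → ℝ) (f : Fin n → ℝ →₀ ℝ) : ℝ :=
  ∑ i, S.lam i * ∑ p ∈ (f i).support, f i p * U i p

/-- The principal's payoff in the event-independent setting. -/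
def payoffEI (S : Setup n) (U : ℝ → ℝ) (f : Fin n → ℝ →₀ ℝ) : ℝ :=
  payoff S (fun _ => U) f

/-- A predictor is perfectly calibrated if `κ(q) = q` on its support. -/
def PerfectlyCalibrated (S : Setup n) (g : Fin n → ℝ →₀ ℝ) : Prop :=
  ∀ q ∈ suppF g, kappa S g q = q

/-- An event-independent post-processing plan: a finitely supported probability
distribution on `[0,1] × [0,1]`; the first coordinate is `q`, the second is `p`. -/
def IsPlan (χ : ℝ × ℝ →₀ ℝ) : Prop :=
  (∀ x, 0 ≤ χ x) ∧ (∀ x ∈ χ.support, x.1 ∈ Set.Icc (0 : ℝ) 1 ∧ x.2 ∈ Set.Icc (0 : ℝ) 1) ∧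
    (∑ x ∈ χ.support, χ x) = 1

/-- The `ℓ_t` calibration cost `∑ χ(q,p) |q - p|^t` of a plan. -/
def planCost (t : ℝ) (χ : ℝ × ℝ →₀ ℝ) : ℝ := ∑ x ∈ χ.support, χ x * |x.1 - x.2| ^ t

/-- The `q`-marginal `∑_p χ(q, p)` of a plan. -/
def planMargQ (χ : ℝ × ℝ →₀ ℝ) (q : ℝ) : ℝ :=
  ∑ x ∈ χ.support.filter fun x => x.1 = q, χ x

/-- Feasibility of a post-processing plan for a perfectly calibrated predictor `g` and
an `ℓ_t` ECE budget `ε`. -/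
def FeasiblePlan (S : Setup n) (t ε : ℝ) (g : Fin n → ℝ →₀ ℝ) (χ : ℝ × ℝ →₀ ℝ) : Prop :=
  planCost t χ ≤ ε ^ t ∧ ∀ q, planMargQ χ q = marginal S g q

/-- The value `f_i(p) = ∑_q (g̃_i(q)/g(q)) χ(q,p)` of the predictor generated by `(g̃, χ)`. -/
def genVal (S : Setup n) (g : Fin n → ℝ →₀ ℝ) (χ : ℝ × ℝ →₀ ℝ) (i : Fin n) (p : ℝ) : ℝ :=
  ∑ q ∈ suppF g, g i q / marginal S g q * χ (q, p)

/-- A predictor generated by some perfectly calibrated predictor and some feasible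
event-independent post-processing plan. -/
def IsGenerated (S : Setup n) (t ε : ℝ) (f : Fin n → ℝ →₀ ℝ) : Prop :=
  ∃ (g : Fin n → ℝ →₀ ℝ) (χ : ℝ × ℝ →₀ ℝ),
    IsPredictor g ∧ PerfectlyCalibrated S g ∧ IsPlan χ ∧ FeasiblePlan S t ε g χ ∧
      ∀ i p, f i p = genVal S g χ i p

/-- The CDF of a finitely supported distribution. -/
def cdf (μ : ℝ →₀ ℝ) (x : ℝ) : ℝ := ∑ q ∈ μ.support.filter fun q => q ≤ x, μ q

/-- The CDF of the distribution placing mass `λ_i` at `θ_i`. -/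
def priorCdf (S : Setup n) (x : ℝ) : ℝ :=
  ∑ i ∈ Finset.univ.filter fun i => S.theta i ≤ x, S.lam i

/-- `μ` is a mean-preserving contraction of the distribution putting mass `λ_i` on `θ_i`. -/
def MPCprior (S : Setup n) (μ : ℝ →₀ ℝ) : Prop :=
  (∀ s ∈ Set.Icc (0 : ℝ) 1,
      (∫ x in (0 : ℝ)..s, cdf μ x) ≤ ∫ x in (0 : ℝ)..s, priorCdf S x) ∧
    (∫ x in (0 : ℝ)..(1 : ℝ), cdf μ x) = ∫ x in (0 : ℝ)..(1 : ℝ), priorCdf S x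

/-- The objective `∑ χ(q,p) U(p)` of the program LP-TwoStep. -/
def LPobj (U : ℝ → ℝ) (χ : ℝ × ℝ →₀ ℝ) : ℝ := ∑ x ∈ χ.support, χ x * U x.2

/-- Feasibility for the program LP-TwoStep. -/
def LPFeasible (S : Setup n) (ε t : ℝ) (χ : ℝ × ℝ →₀ ℝ) (g : ℝ →₀ ℝ) : Prop :=
  (∀ x, 0 ≤ χ x) ∧
  (∀ x ∈ χ.support, x.1 ∈ Set.Icc (0 : ℝ) 1 ∧ x.2 ∈ Set.Icc (0 : ℝ) 1) ∧
  planCost t χ ≤ ε ^ t ∧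
  (∀ q, planMargQ χ q = g q) ∧ IsDist g ∧ MPCprior S g

/-- The optimal value of LP-TwoStep. -/
def OPTLP (S : Setup n) (ε t : ℝ) (U : ℝ → ℝ) : ℝ :=
  sSup {v | ∃ (χ : ℝ × ℝ →₀ ℝ) (g : ℝ →₀ ℝ), LPFeasible S ε t χ g ∧ v = LPobj U χ}

/-- Symmetric linear-tailed convex function with linear tails `[0, xL]`, `[xH, 1]` and
tail slopes `s1`, `s2` of equal absolute value. -/
def SymLinTailedConvex (Γ : ℝ → ℝ) (xL xH s1 s2 : ℝ) : Prop :=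
  ConvexOn ℝ (Set.Icc (0 : ℝ) 1) Γ ∧ 0 ≤ xL ∧ xL ≤ xH ∧ xH ≤ 1 ∧ |s1| = |s2| ∧
    (∃ c1, ∀ x ∈ Set.Icc (0 : ℝ) xL, Γ x = c1 + s1 * x) ∧
    (∃ c2, ∀ x ∈ Set.Icc xH (1 : ℝ), Γ x = c2 + s2 * x)

/-- Tuples `(i, j, q, p)` indexing a bi-event post-processing plan. -/
abbrev BiTuple (n : ℕ) := Fin n × Fin n × ℝ × ℝ

/-- The contribution ratio `r_{i,j}(q)`. -/
def ratio (S : Setup n) (i j : Fin n) (q : ℝ) : ℝ :=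
  if S.theta i < S.theta j then (S.theta j - q) / (S.theta j - S.theta i) else 1

/-- The contribution of the tuple `x = (i', j', q, p)` to event `i`:
`r_{i,j'}(q)` if `i' = i`, and `1 - r_{i',i}(q)` if `j' = i ≠ i'`. -/
def contrib (S : Setup n) (x : BiTuple n) (i : Fin n) : ℝ :=
  (if x.1 = i then ratio S x.1 x.2.1 x.2.2.1 else 0) +
    (if x.2.1 = i ∧ x.1 ≠ i then 1 - ratio S x.1 x.2.1 x.2.2.1 else 0)

/-- A bi-event post-processing plan. -/
def IsBiPlan (S : Setup n) (χ : BiTuple n →₀ ℝ) : Prop :=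
  (∀ x, 0 ≤ χ x) ∧
    ∀ x ∈ χ.support, x.1 ≤ x.2.1 ∧ x.2.2.1 ∈ Set.Icc (0 : ℝ) 1 ∧
      x.2.2.2 ∈ Set.Icc (0 : ℝ) 1 ∧ S.theta x.1 ≤ x.2.2.1 ∧ x.2.2.1 ≤ S.theta x.2.1

/-- Feasibility of a bi-event post-processing plan for `ℓ_t` ECE budget `ε`. -/
def FeasibleBiPlan (S : Setup n) (t ε : ℝ) (χ : BiTuple n →₀ ℝ) : Prop :=
  IsBiPlan S χ ∧
    (∑ x ∈ χ.support, χ x * |x.2.2.1 - x.2.2.2| ^ t) ≤ ε ^ t ∧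
    ∀ i, (∑ x ∈ χ.support, χ x * contrib S x i) = S.lam i

/-- The value `f_i(p)` of the predictor generated by a bi-event post-processing plan. -/
def genValBi (S : Setup n) (χ : BiTuple n →₀ ℝ) (i : Fin n) (p : ℝ) : ℝ :=
  1 / S.lam i * ∑ x ∈ χ.support.filter fun x => x.2.2.2 = p, χ x * contrib S x i

/-- The objective of LP-TwoStep+: `∑ χ_{i,j}(q,p) U_{i,j}(q,p)`. -/
def biObj (S : Setup n) (U : Fin n → ℝ → ℝ) (χ : BiTuple n →₀ ℝ) : ℝ :=
  ∑ x ∈ χ.support, χ x * (ratio S x.1 x.2.1 x.2.2.1 * U x.1 x.2.2.2 +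
    (1 - ratio S x.1 x.2.1 x.2.2.1) * U x.2.1 x.2.2.2)

/-- The optimal value of LP-TwoStep+. -/
def OPTBi (S : Setup n) (U : Fin n → ℝ → ℝ) (t ε : ℝ) : ℝ :=
  sSup {v | ∃ χ : BiTuple n →₀ ℝ, FeasibleBiPlan S t ε χ ∧ v = biObj S U χ}

/-- `U` is piecewise constant with all its discontinuity points in `Z`. -/
def PiecewiseConstWrt (Z : Finset ℝ) (U : ℝ → ℝ) : Prop :=
  ∀ x ∈ Set.Icc (0 : ℝ) 1, ∀ y ∈ Set.Icc (0 : ℝ) 1,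
    (∀ z ∈ Z, z ∉ Set.uIcc x y) → U x = U y

/-- The bound `S = ⌈2 ln(1/δ) / ln(1+δ)⌉` of the second discretization layer. -/
def Sbound (δ : ℝ) : ℕ := ⌈2 * Real.log (1 / δ) / Real.log (1 + δ)⌉₊

/-- The instance-dependent two-layer discretized set `S_δ`. -/
def gridSet (S : Setup n) (Z : Finset ℝ) (ε t δ : ℝ) : Set ℝ :=
  ({x : ℝ | ∃ k : ℕ, x = (k : ℝ) * δ} ∪ {(1 : ℝ)} ∪ Set.range S.theta ∪ (↑Z : Set ℝ) ∪
      {x : ℝ | ∃ z ∈ (↑Z : Set ℝ) ∪ Set.range S.theta, ∃ s : ℕ, s ≤ Sbound δ ∧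
        (x = z + (ε ^ t * δ * (1 + δ) ^ s) ^ (1 / t) ∨
          x = z - (ε ^ t * δ * (1 + δ) ^ s) ^ (1 / t))}) ∩
    Set.Icc (0 : ℝ) 1

/-- Feasibility for the discretized program LP-DiscTwoStep+. -/
def DiscFeasibleBiPlan (S : Setup n) (Z : Finset ℝ) (t ε δ : ℝ) (χ : BiTuple n →₀ ℝ) : Prop :=
  FeasibleBiPlan S t ε χ ∧
    ∀ x ∈ χ.support, x.2.2.1 ∈ gridSet S Z ε t δ ∧ x.2.2.2 ∈ gridSet S Z ε t δ

/-- The optimal value of LP-DiscTwoStep+. -/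
def OPTBiDisc (S : Setup n) (U : Fin n → ℝ → ℝ) (Z : Finset ℝ) (t ε δ : ℝ) : ℝ :=
  sSup {v | ∃ χ : BiTuple n →₀ ℝ, DiscFeasibleBiPlan S Z t ε δ χ ∧ v = biObj S U χ}

/-- A Bayesian persuasion instance with signal-dependent bias: states `θ_i` with
prior `λ`, actions `A`, sender utility `u a i = u(a, θ_i) ≥ 0`, and receiver utility
determined by `v1 a = v(a,1)` and `v0 a = v(a,0)`. -/
structure PSetup (n : ℕ) (A : Type*) : Type _ where
  lam : Fin n → ℝ
  theta : Fin n → ℝ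
  u : A → Fin n → ℝ
  v1 : A → ℝ
  v0 : A → ℝ
  lam_pos : ∀ i, 0 < lam i
  lam_sum : ∑ i, lam i = 1
  theta_mem : ∀ i, theta i ∈ Set.Icc (0 : ℝ) 1
  u_nonneg : ∀ a i, 0 ≤ u a i

variable {A σT : Type*}

/-- The receiver's utility from action `a` at belief mean `x`. -/
def rcvU (P : PSetup n A) (a : A) (x : ℝ) : ℝ := x * P.v1 a + (1 - x) * P.v0 a

/-- The total probability `m(σ)` of a signal `σ`. -/
def mass [Fintype σT] (P : PSetup n A) (π : Fin n → σT → ℝ) (σ : σT) : ℝ :=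
  ∑ i, P.lam i * π i σ

/-- The biased posterior mean `p(σ)` of the receiver upon signal `σ`. -/
def belief [Fintype σT] (P : PSetup n A) (π : Fin n → σT → ℝ) (b : σT → ℝ) (σ : σT) : ℝ :=
  (b σ + ∑ i, P.lam i * π i σ * P.theta i) / mass P π σ

/-- Validity of a sender strategy `(π, b)`. -/
def ValidStrategy [Fintype σT] (P : PSetup n A) (π : Fin n → σT → ℝ) (b : σT → ℝ) : Prop :=
  (∀ i σ, 0 ≤ π i σ) ∧ (∀ i, ∑ σ, π i σ = 1) ∧
    ∀ σ, 0 < mass P π σ → belief P π b σ ∈ Set.Icc (0 : ℝ) 1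

/-- `astar` is a receiver best-response selection for the strategy `(π, b)`. -/
def BestResponse [Fintype σT] (P : PSetup n A) (π : Fin n → σT → ℝ) (b : σT → ℝ)
    (astar : σT → A) : Prop :=
  ∀ σ, 0 < mass P π σ → ∀ a, rcvU P a (belief P π b σ) ≤ rcvU P (astar σ) (belief P π b σ)

/-- The bounded-rationality constraint on the total bias. -/
def BRconstraint [Fintype σT] (P : PSetup n A) (t ε : ℝ) (π : Fin n → σT → ℝ)
    (b : σT → ℝ) : Prop :=
  (∑ σ, mass P π σ * |b σ / mass P π σ| ^ t) ^ (1 / t) ≤ ε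

/-- The sender's expected payoff from strategy `π` with receiver selection `astar`. -/
def senderPayoff [Fintype σT] (P : PSetup n A) (π : Fin n → σT → ℝ) (astar : σT → A) : ℝ :=
  ∑ i, P.lam i * ∑ σ, π i σ * P.u (astar σ) i

/-- Feasibility for the action-recommendation program P-ActRec. -/
def PActRecFeasible [Fintype A] (P : PSetup n A) (t ε : ℝ)
    (π : Fin n → A → ℝ) (b : A → ℝ) : Prop :=
  (∀ i a, 0 ≤ π i a) ∧ (∀ i, ∑ a, π i a = 1) ∧
  (∀ a, mass P π a = 0 → b a = 0) ∧
  (∑ a, mass P π a * |b a / mass P π a| ^ t) ≤ ε ^ t ∧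
  (∀ a, 0 ≤ b a + ∑ i, P.lam i * π i a * P.theta i) ∧
  (∀ a, b a + ∑ i, P.lam i * π i a * P.theta i ≤ mass P π a) ∧
  ∀ a a' : A,
    (b a + ∑ i, P.lam i * π i a * P.theta i) * P.v1 a' +
        (mass P π a - (b a + ∑ i, P.lam i * π i a * P.theta i)) * P.v0 a' ≤
      (b a + ∑ i, P.lam i * π i a * P.theta i) * P.v1 a +
        (mass P π a - (b a + ∑ i, P.lam i * π i a * P.theta i)) * P.v0 a

/-- The sender-side marginal probability of recommendation `a` (calibration model). -/
def pmass [Fintype A] (S : Setup n) (π : Fin n → A → ℝ) (a : A) : ℝ := ∑ i, S.lam i * π i a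

/-- The biased posterior mean associated with recommendation `a` (calibration model). -/
def pbelief [Fintype A] (S : Setup n) (π : Fin n → A → ℝ) (b : A → ℝ) (a : A) : ℝ :=
  (b a + ∑ i, S.lam i * π i a * S.theta i) / pmass S π a

lemma sum_contrib_mul (S : Setup n) (x : BiTuple n) (a : Fin n → ℝ) :
    ∑ k, contrib S x k * a k = ratio S x.1 x.2.1 x.2.2.1 * a x.1 +
      (1 - ratio S x.1 x.2.1 x.2.2.1) * a x.2.1 := by
  unfold contrib
  simp only [add_mul, Finset.sum_add_distrib, ite_mul, zero_mul, Finset.sum_ite_eq,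
    Finset.mem_univ, if_true]
  congr 1
  by_cases h : x.1 = x.2.1
  · have hr : ratio S x.1 x.2.1 x.2.2.1 = 1 := by simp [ratio, h]
    rw [hr]
    simp
  · rw [Finset.sum_eq_single x.2.1]
    · simp [h]
    · intro b _ hb
      rw [if_neg]
      rintro ⟨h1, _⟩
      exact hb h1.symm
    · simp

lemma ratio_mem (S : Setup n) {i j : Fin n} {q : ℝ} (h1 : S.theta i ≤ q) (h2 : q ≤ S.theta j) :
    0 ≤ ratio S i j q ∧ ratio S i j q ≤ 1 := by
  unfold ratio
  split_ifs with h
  · have : 0 < S.theta j - S.theta i := by linarith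
    constructor
    · apply div_nonneg <;> linarith
    · rw [div_le_one this]; linarith
  · norm_num

lemma ratio_mean (S : Setup n) {i j : Fin n} {q : ℝ} (h1 : S.theta i ≤ q) (h2 : q ≤ S.theta j) :
    ratio S i j q * S.theta i + (1 - ratio S i j q) * S.theta j = q := by
  unfold ratio
  split_ifs with h
  · have : S.theta j - S.theta i ≠ 0 := by linarith
    field_simp
    ring
  · linarith

lemma contrib_nonneg (S : Setup n) {x : BiTuple n} (h1 : S.theta x.1 ≤ x.2.2.1)
    (h2 : x.2.2.1 ≤ S.theta x.2.1) (k : Fin n) : 0 ≤ contrib S x k := by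
  obtain ⟨a, b⟩ := ratio_mem S h1 h2
  unfold contrib
  split_ifs <;> linarith

lemma jensen_aux {ι : Type*} (s : Finset ι) (w q : ι → ℝ) (p κ t : ℝ) (ht : 1 ≤ t)
    (hw : ∀ x ∈ s, 0 ≤ w x) (hκ : κ = (∑ x ∈ s, w x * q x) / ∑ x ∈ s, w x) :
    (∑ x ∈ s, w x) * |κ - p| ^ t ≤ ∑ x ∈ s, w x * |q x - p| ^ t := by
  set W := ∑ x ∈ s, w x with hW
  have hW0 : 0 ≤ W := Finset.sum_nonneg hw
  rcases hW0.eq_or_lt with h | h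
  · rw [← h, zero_mul]
    exact Finset.sum_nonneg fun x hx => mul_nonneg (hw x hx) (by positivity)
  · have key := Real.rpow_arith_mean_le_arith_mean_rpow s (fun x => w x / W)
      (fun x => |q x - p|) (fun x hx => div_nonneg (hw x hx) h.le)
      (by rw [← Finset.sum_div, ← hW, div_self h.ne']) (fun x _ => abs_nonneg _) ht
    have e : κ - p = ∑ x ∈ s, w x / W * (q x - p) := by
      simp only [mul_sub, Finset.sum_sub_distrib]
      rw [← Finset.sum_mul, ← Finset.sum_div, ← hW, div_self h.ne', one_mul, hκ, Finset.sum_div]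
      congr 1
      exact Finset.sum_congr rfl fun x _ => by ring
    have e2 : |κ - p| ≤ ∑ x ∈ s, w x / W * |q x - p| := by
      rw [e]
      refine (Finset.abs_sum_le_sum_abs _ _).trans (Finset.sum_le_sum fun x hx => ?_)
      rw [abs_mul, abs_of_nonneg (div_nonneg (hw x hx) h.le)]
    have e3 : |κ - p| ^ t ≤ ∑ x ∈ s, w x / W * |q x - p| ^ t :=
      (Real.rpow_le_rpow (abs_nonneg _) e2 (by linarith)).trans key
    calc W * |κ - p| ^ t ≤ W * ∑ x ∈ s, w x / W * |q x - p| ^ t :=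
          mul_le_mul_of_nonneg_left e3 h.le
      _ = _ := by
          rw [Finset.mul_sum]
          refine Finset.sum_congr rfl fun x _ => ?_
          field_simp

lemma gen_of_plan (S : Setup n) (t ε : ℝ) (ht : 1 ≤ t) (hε : 0 ≤ ε) (U : Fin n → ℝ → ℝ)
    (χ : BiTuple n →₀ ℝ) (hχ : FeasibleBiPlan S t ε χ) :
    ∃ f : Fin n → ℝ →₀ ℝ, (∀ i p, f i p = genValBi S χ i p) ∧ IsPredictor f ∧
        ECE S t f ≤ ε ∧ payoff S U f = biObj S U χ := by
  classical
  obtain ⟨⟨h0, hs⟩, hcost, hlam⟩ := hχ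
  set P : Finset ℝ := χ.support.image fun x => x.2.2.2 with hP
  have hz : ∀ i p, genValBi S χ i p ≠ 0 → p ∈ P := by
    intro i p hne
    by_contra hp
    apply hne
    unfold genValBi
    rw [Finset.filter_eq_empty_iff.2, Finset.sum_empty, mul_zero]
    intro x hx hxp
    exact hp (Finset.mem_image.2 ⟨x, hx, hxp⟩)
  let f : Fin n → ℝ →₀ ℝ := fun i => Finsupp.onFinset P (genValBi S χ i) (hz i)
  have hf : ∀ i p, f i p = genValBi S χ i p := fun i p => rfl
  have hsub : ∀ i, (f i).support ⊆ P := fun i => Finsupp.support_onFinset_subset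
  have hsum : ∀ i (G : ℝ → ℝ), S.lam i * ∑ p ∈ (f i).support, f i p * G p =
      ∑ x ∈ χ.support, χ x * contrib S x i * G x.2.2.2 := by
    intro i G
    rw [Finset.sum_subset (hsub i) (fun p _ hp => by
      rw [Finsupp.notMem_support_iff.1 hp, zero_mul]), Finset.mul_sum,
      ← Finset.sum_fiberwise_of_maps_to (s := χ.support) (t := P) (g := fun x => x.2.2.2)
        (fun x hx => Finset.mem_image_of_mem _ hx)]
    refine Finset.sum_congr rfl fun p _ => ?_
    rw [hf, genValBi]
    have := (S.lam_pos i).ne'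
    rw [← mul_assoc, ← mul_assoc, mul_one_div_cancel this, one_mul, Finset.sum_mul]
    refine Finset.sum_congr rfl fun x hx => ?_
    rw [(Finset.mem_filter.1 hx).2]
  have hmul : ∀ (a : Fin n → ℝ) p, ∑ i, S.lam i * f i p * a i =
      ∑ x ∈ χ.support.filter fun x => x.2.2.2 = p, χ x * ∑ i, contrib S x i * a i := by
    intro a p
    simp only [Finset.mul_sum]
    rw [Finset.sum_comm]
    refine Finset.sum_congr rfl fun i _ => ?_
    have := (S.lam_pos i).ne'
    rw [hf, genValBi, ← mul_assoc, mul_one_div_cancel this, one_mul, Finset.sum_mul]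
    exact Finset.sum_congr rfl fun x _ => by ring
  have hmarg : ∀ p, marginal S f p = ∑ x ∈ χ.support.filter fun x => x.2.2.2 = p, χ x := by
    intro p
    have := hmul (fun _ => 1) p
    simp only [sum_contrib_mul] at this
    unfold marginal
    simpa using this
  have hnum : ∀ p, ∑ i, S.lam i * f i p * S.theta i =
      ∑ x ∈ χ.support.filter fun x => x.2.2.2 = p, χ x * x.2.2.1 := by
    intro p
    rw [hmul]
    refine Finset.sum_congr rfl fun x hx => ?_
    obtain ⟨_, _, _, ha, hb⟩ := hs x (Finset.mem_filter.1 hx).1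
    rw [sum_contrib_mul, ratio_mean S ha hb]
  refine ⟨f, hf, ?_, ?_, ?_⟩
  · intro i
    refine ⟨fun p => ?_, fun p hp => ?_, ?_⟩
    · rw [hf, genValBi]
      refine mul_nonneg (by have := S.lam_pos i; positivity) (Finset.sum_nonneg fun x hx => ?_)
      obtain ⟨_, _, _, ha, hb⟩ := hs x (Finset.mem_filter.1 hx).1
      exact mul_nonneg (h0 x) (contrib_nonneg S ha hb i)
    · obtain ⟨x, hx, rfl⟩ := Finset.mem_image.1 (hsub i hp)
      exact (hs x hx).2.2.1
    · have := hsum i (fun _ => 1)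
      simp only [mul_one] at this
      rw [hlam i] at this
      have hl := (S.lam_pos i).ne'
      exact mul_left_cancel₀ hl (by rw [this, mul_one])
  · unfold ECE
    have hsP : suppF f ⊆ P := by
      intro p hp
      obtain ⟨i, _, hi⟩ := Finset.mem_biUnion.1 hp
      exact hsub i hi
    have hm0 : ∀ p, 0 ≤ marginal S f p := fun p => by
      rw [hmarg]; exact Finset.sum_nonneg fun x _ => h0 x
    have hle : ∑ p ∈ suppF f, marginal S f p * |kappa S f p - p| ^ t ≤ ε ^ t := by
      refine le_trans ?_ hcost
      rw [← Finset.sum_fiberwise_of_maps_to (s := χ.support) (t := P) (g := fun x => x.2.2.2)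
        (fun x hx => Finset.mem_image_of_mem _ hx)]
      refine (Finset.sum_le_sum_of_subset_of_nonneg hsP fun p _ _ =>
        mul_nonneg (hm0 p) (by positivity)).trans (Finset.sum_le_sum fun p _ => ?_)
      have := jensen_aux (χ.support.filter fun x => x.2.2.2 = p) (fun x => χ x)
        (fun x => x.2.2.1) p (kappa S f p) t ht (fun x _ => h0 x)
        (by rw [kappa, hnum, hmarg])
      rw [hmarg]
      refine this.trans (le_of_eq (Finset.sum_congr rfl fun x hx => ?_))
      rw [(Finset.mem_filter.1 hx).2]
    calc _ ≤ (ε ^ t) ^ (1 / t) := Real.rpow_le_rpow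
          (Finset.sum_nonneg fun p _ => mul_nonneg (hm0 p) (by positivity)) hle (by positivity)
      _ = ε := by rw [one_div, Real.rpow_rpow_inv hε (by linarith)]
  · unfold payoff biObj
    simp only [hsum]
    rw [Finset.sum_comm]
    refine Finset.sum_congr rfl fun x _ => ?_
    rw [← sum_contrib_mul S x (fun k => U k x.2.2.2), Finset.mul_sum]
    exact Finset.sum_congr rfl fun i _ => by ring

lemma pair_lemma (S : Setup n) (m : Fin n → ℝ) (κ : ℝ) (hm : ∀ i, 0 ≤ m i)
    (hκ : ∑ i, m i * S.theta i = κ * ∑ i, m i) :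
    ∃ w : Fin n → Fin n → ℝ, (∀ i j, 0 ≤ w i j) ∧
      (∀ i j, w i j ≠ 0 → i ≤ j ∧ S.theta i ≤ κ ∧ κ ≤ S.theta j) ∧
      ∀ p k, ∑ i, ∑ j, w i j * contrib S (i, j, κ, p) k = m k := by
  classical
  set D := ∑ j, m j * max (S.theta j - κ) 0 with hD
  have hD' : D = ∑ j, m j * max (κ - S.theta j) 0 := by
    have : D - ∑ j, m j * max (κ - S.theta j) 0 = 0 := by
      rw [hD, ← Finset.sum_sub_distrib]
      have : ∑ i, m i * (S.theta i - κ) = 0 := by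
        simp only [mul_sub, Finset.sum_sub_distrib]
        rw [hκ, ← Finset.sum_mul]; ring
      refine Eq.trans ?_ this
      refine Finset.sum_congr rfl fun i _ => ?_
      rcases le_total (S.theta i) κ with h | h
      · rw [max_eq_right (by linarith), max_eq_left (by linarith)]; ring
      · rw [max_eq_left (by linarith), max_eq_right (by linarith)]; ring
    linarith
  have hD0 : 0 ≤ D := Finset.sum_nonneg fun j _ => mul_nonneg (hm j) (le_max_right _ _)
  have hz1 : ∀ j, κ < S.theta j → D = 0 → m j = 0 := by
    intro j hj h
    rw [hD, Finset.sum_eq_zero_iff_of_nonneg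
      (fun j _ => mul_nonneg (hm j) (le_max_right _ _))] at h
    have := h j (Finset.mem_univ _)
    rw [max_eq_left (by linarith)] at this
    rcases mul_eq_zero.1 this with h | h
    · exact h
    · linarith
  have hz2 : ∀ j, S.theta j < κ → D = 0 → m j = 0 := by
    intro j hj h
    rw [hD', Finset.sum_eq_zero_iff_of_nonneg
      (fun j _ => mul_nonneg (hm j) (le_max_right _ _))] at h
    have := h j (Finset.mem_univ _)
    rw [max_eq_left (by linarith)] at this
    rcases mul_eq_zero.1 this with h | h
    · exact h
    · linarith
  let w : Fin n → Fin n → ℝ := fun i j =>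
    if S.theta i < κ ∧ κ < S.theta j then m i * m j * (S.theta j - S.theta i) / D
    else if i = j ∧ S.theta i = κ then m i else 0
  let A : Fin n → Fin n → ℝ := fun i j =>
    if S.theta i < κ then m i * (m j * max (S.theta j - κ) 0) / D
    else if i = j ∧ S.theta i = κ then m i else 0
  let B : Fin n → Fin n → ℝ := fun i j =>
    if κ < S.theta j then m j * (m i * max (κ - S.theta i) 0) / D else 0
  have hwc : ∀ p i j k, w i j * contrib S (i, j, κ, p) k =
      (if i = k then A i j else 0) + (if j = k then B i j else 0) := by
    intro p i j k
    by_cases hij : i = j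
    · subst hij
      simp only [w, A, B, contrib, ratio, lt_irrefl, if_false]
      rcases lt_trichotomy (S.theta i) κ with h | h | h
      · simp [h, h.ne, h.le, h.not_gt]
      · simp [h]
      · simp [h, h.ne', h.le, h.not_gt]
    · simp only [w, A, B, contrib, ratio, hij, false_and, if_false]
      rcases lt_or_ge (S.theta i) κ with h | h
      · rcases lt_or_ge κ (S.theta j) with h' | h'
        · have h3 : S.theta i < S.theta j := h.trans h'
          have h4 : S.theta j - S.theta i ≠ 0 := by linarith
          rw [max_eq_left (by linarith : (0:ℝ) ≤ S.theta j - κ),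
            max_eq_left (by linarith : (0:ℝ) ≤ κ - S.theta i)]
          simp only [h, h', h3, and_self, if_true]
          by_cases hik : i = k
          · subst hik
            have : ¬ j = i := fun h => hij h.symm
            simp only [this, if_true, if_false, false_and, add_zero]
            field_simp
          · by_cases hjk : j = k
            · simp only [hik, hjk, if_true, if_false, true_and, ne_eq, not_false_eq_true, zero_add]
              rw [hjk] at h4
              field_simp
              ring
            · simp [hik, hjk]
        · simp [h, h'.not_gt, max_eq_right (by linarith : S.theta j - κ ≤ 0)]
      · simp [h.not_gt, max_eq_right (by linarith : κ - S.theta i ≤ 0)]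
  refine ⟨w, ?_, ?_, ?_⟩
  · intro i j
    simp only [w]
    split_ifs with h h'
    · have := hm i
      have := hm j
      have : 0 ≤ S.theta j - S.theta i := by linarith [h.1, h.2]
      positivity
    · exact hm i
    · exact le_rfl
  · intro i j hne
    simp only [w] at hne
    split_ifs at hne with h h'
    · refine ⟨?_, h.1.le, h.2.le⟩
      by_contra hc
      have := S.theta_mono (not_le.1 hc).le
      linarith [h.1, h.2]
    · obtain ⟨rfl, h2⟩ := h'
      exact ⟨le_rfl, h2.le, h2.ge⟩
    · exact absurd rfl hne
  · intro p k
    simp only [hwc, Finset.sum_add_distrib]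
    have e1 : ∑ i, ∑ j, (if i = k then A i j else 0) = ∑ j, A k j := by
      rw [Finset.sum_comm]; simp
    have e2 : ∑ i, ∑ j, (if j = k then B i j else 0) = ∑ i, B i k := by simp
    rw [e1, e2]
    rcases lt_trichotomy (S.theta k) κ with h | h | h
    · simp only [A, B, h, h.not_gt, if_true, if_false, Finset.sum_const_zero, add_zero]
      rw [← Finset.sum_div, ← Finset.mul_sum, ← hD]
      by_cases hd : D = 0
      · rw [hz2 k h hd]; simp
      · field_simp
    · simp [A, B, h]
    · simp only [A, B, h, h.not_gt, h.ne', and_false, if_true, if_false, Finset.sum_const_zero,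
        zero_add]
      rw [← Finset.sum_div, ← Finset.mul_sum, ← hD']
      by_cases hd : D = 0
      · rw [hz1 k h hd]; simp
      · field_simp

lemma plan_of_pred (S : Setup n) (t ε : ℝ) (ht : 1 ≤ t) (U : Fin n → ℝ → ℝ)
    (f : Fin n → ℝ →₀ ℝ) (hf : IsPredictor f) (hE : ECE S t f ≤ ε) :
    ∃ χ : BiTuple n →₀ ℝ, FeasibleBiPlan S t ε χ ∧ payoff S U f = biObj S U χ := by
  classical
  have hm0 : ∀ p i, 0 ≤ S.lam i * f i p := fun p i =>
    mul_nonneg (S.lam_pos i).le ((hf i).1 p)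
  have hM0 : ∀ p, 0 ≤ marginal S f p := fun p => Finset.sum_nonneg fun i _ => hm0 p i
  have hκ : ∀ p, ∑ i, S.lam i * f i p * S.theta i = kappa S f p * ∑ i, S.lam i * f i p := by
    intro p
    by_cases h : marginal S f p = 0
    · have h' := h
      unfold marginal at h
      rw [h, mul_zero]
      rw [Finset.sum_eq_zero_iff_of_nonneg (fun i _ => hm0 p i)] at h
      exact Finset.sum_eq_zero fun i hi => by rw [h i hi, zero_mul]
    · unfold kappa
      exact (div_mul_cancel₀ _ h).symm
  choose w hw0 hwv hwc using fun p => pair_lemma S (fun i => S.lam i * f i p) (kappa S f p)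
    (hm0 p) (hκ p)
  let χ : BiTuple n →₀ ℝ := ∑ p ∈ suppF f, ∑ i, ∑ j,
    Finsupp.single ((i, j, kappa S f p, p) : BiTuple n) (w p i j)
  have hL : ∀ G : BiTuple n → ℝ, ∑ x ∈ χ.support, χ x * G x =
      ∑ p ∈ suppF f, ∑ i, ∑ j, w p i j * G (i, j, kappa S f p, p) := by
    intro G
    have : ∑ x ∈ χ.support, χ x * G x = Finsupp.linearCombination ℝ G χ := rfl
    rw [this]
    simp only [χ, map_sum, Finsupp.linearCombination_single, smul_eq_mul]
  have hval : ∀ x, χ x = ∑ p ∈ suppF f, ∑ i, ∑ j,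
      (if ((i, j, kappa S f p, p) : BiTuple n) = x then w p i j else 0) := by
    intro x
    simp only [χ, Finsupp.finsetSum_apply, Finsupp.single_apply]
  have hcs : ∀ (a : Fin n → ℝ) p, ∑ i, ∑ j, w p i j *
      (ratio S i j (kappa S f p) * a i + (1 - ratio S i j (kappa S f p)) * a j) =
      ∑ k, S.lam k * f k p * a k := by
    intro a p
    simp only [← hwc p p, Finset.sum_mul]
    rw [Finset.sum_comm]
    conv_rhs => rw [Finset.sum_comm]
    rw [Finset.sum_comm]
    refine Finset.sum_congr rfl fun i _ => ?_
    rw [Finset.sum_comm]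
    refine Finset.sum_congr rfl fun j _ => ?_
    have := sum_contrib_mul S (i, j, kappa S f p, p) a
    simp only at this
    rw [← this, Finset.mul_sum]
    exact Finset.sum_congr rfl fun k _ => by ring
  have hsubs : ∀ i, (f i).support ⊆ suppF f := fun i p hp =>
    Finset.mem_biUnion.2 ⟨i, Finset.mem_univ _, hp⟩
  have hext : ∀ i (G : ℝ → ℝ), ∑ p ∈ (f i).support, f i p * G p =
      ∑ p ∈ suppF f, f i p * G p := fun i G =>
    Finset.sum_subset (hsubs i) (fun p _ hp => by
      rw [Finsupp.notMem_support_iff.1 hp, zero_mul])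
  refine ⟨χ, ⟨⟨?_, ?_⟩, ?_, ?_⟩, ?_⟩
  · intro x
    rw [hval]
    refine Finset.sum_nonneg fun p _ => Finset.sum_nonneg fun i _ => Finset.sum_nonneg fun j _ => ?_
    split_ifs
    · exact hw0 p i j
    · exact le_rfl
  · intro x hx
    by_contra hc
    apply Finsupp.mem_support_iff.1 hx
    rw [hval]
    refine Finset.sum_eq_zero fun p hp => Finset.sum_eq_zero fun i _ =>
      Finset.sum_eq_zero fun j _ => ?_
    split_ifs with h
    · by_contra hne
      apply hc
      subst h
      obtain ⟨h1, h2, h3⟩ := hwv p i j hne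
      obtain ⟨k, _, hk⟩ := Finset.mem_biUnion.1 hp
      exact ⟨h1, ⟨(S.theta_mem i).1.trans h2, h3.trans (S.theta_mem j).2⟩, (hf k).2.1 p hk, h2, h3⟩
    · rfl
  · rw [hL (fun x => |x.2.2.1 - x.2.2.2| ^ t)]
    have e : ∑ p ∈ suppF f, ∑ i, ∑ j, w p i j * |kappa S f p - p| ^ t =
        ∑ p ∈ suppF f, marginal S f p * |kappa S f p - p| ^ t := by
      refine Finset.sum_congr rfl fun p _ => ?_
      simp only [← Finset.sum_mul]
      congr 1
      have := hcs (fun _ => 1) p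
      simpa [marginal] using this
    simp only
    rw [e]
    have hn : 0 ≤ ∑ p ∈ suppF f, marginal S f p * |kappa S f p - p| ^ t :=
      Finset.sum_nonneg fun p _ => mul_nonneg (hM0 p) (by positivity)
    unfold ECE at hE
    have := Real.rpow_le_rpow (by positivity) hE (by linarith : 0 ≤ t)
    rwa [one_div, Real.rpow_inv_rpow hn (by linarith)] at this
  · intro k
    rw [hL (fun x => contrib S x k)]
    simp only [hwc]
    rw [← Finset.mul_sum]
    have := hext k (fun _ => 1)
    simp only [mul_one] at this
    rw [← this, (hf k).2.2, mul_one]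
  · unfold payoff biObj
    rw [hL (fun x => ratio S x.1 x.2.1 x.2.2.1 * U x.1 x.2.2.2 +
      (1 - ratio S x.1 x.2.1 x.2.2.1) * U x.2.1 x.2.2.2)]
    simp only [hext, Finset.mul_sum]
    rw [Finset.sum_comm]
    refine Finset.sum_congr rfl fun p _ => ?_
    rw [hcs (fun k => U k p) p]
    exact Finset.sum_congr rfl fun i _ => by ring

/-- The supremum of the principal's payoff over all finitely supported
`(ε, ℓ_t)`-calibrated predictors equals the optimal value of LP-TwoStep+; moreover
every feasible bi-event post-processing plan generates an `(ε, ℓ_t)`-calibrated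
predictor whose payoff equals its objective value in LP-TwoStep+. -/
theorem statement12 {n : ℕ} (S : Setup n) (t ε : ℝ) (ht : 1 ≤ t) (hε : 0 ≤ ε)
    (U : Fin n → ℝ → ℝ) (hU0 : ∀ i, ∀ p ∈ Set.Icc (0 : ℝ) 1, 0 ≤ U i p) :
    sSup {v | ∃ f : Fin n → ℝ →₀ ℝ,
        (IsPredictor f ∧ ECE S t f ≤ ε) ∧ v = payoff S U f} = OPTBi S U t ε ∧
    ∀ χ : BiTuple n →₀ ℝ, FeasibleBiPlan S t ε χ →
      ∃ f : Fin n → ℝ →₀ ℝ, (∀ i p, f i p = genValBi S χ i p) ∧ IsPredictor f ∧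
        ECE S t f ≤ ε ∧ payoff S U f = biObj S U χ := by
  refine ⟨?_, fun χ hχ => gen_of_plan S t ε ht hε U χ hχ⟩
  unfold OPTBi
  congr 1
  ext v
  constructor
  · rintro ⟨f, ⟨hf, hE⟩, rfl⟩
    obtain ⟨χ, hχ, h⟩ := plan_of_pred S t ε ht U f hf hE
    exact ⟨χ, hχ, h⟩
  · rintro ⟨χ, hχ, rfl⟩
    obtain ⟨f, _, hf, hE, h⟩ := gen_of_plan S t ε ht hε U χ hχ
    exact ⟨f, ⟨hf, hE⟩, h.symm⟩

end PersuasiveCalibration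
end
end

section
/- (Action-recommendation program characterization.) For any ε ≥ 0 and t ≥ 1, the supremum of the sender's payoff over all sender strategies (π, b) on arbitrary finite signal sets satisfying the bounded-rationality constraint equals the supremum of the program P-ActRec: maximize Σ_i Σ_{a∈A} λ_i·π_i(a)·u(a,θ_i) over variables π_i(a) ≥ 0 and b(a) ∈ ℝ, subject to Σ_a π_i(a) = 1 for every i; writing m_a = Σ_i λ_i·π_i(a) and x_a = b(a) + Σ_i λ_i·π_i(a)·θ_i, the constraints Σ_{a: m_a>0} m_a·|b(a)/m_a|^t ≤ ε^t (with b(a) = 0 whenever m_a = 0), 0 ≤ x_a ≤ m_a for every a, and, for all a, a' ∈ A, x_a·v(a,1) + (m_a − x_a)·v(a,0) ≥ x_a·v(a',1) + (m_a − x_a)·v(a',0). -/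
open Finset

noncomputable section

namespace PersuasiveCalibration

variable {n : ℕ}

variable {A σT : Type*}

lemma mass_nonneg_aux {n : ℕ} {A σT : Type*} [Fintype σT] (P : PSetup n A)
    (π : Fin n → σT → ℝ) (h : ∀ i σ, 0 ≤ π i σ) (σ : σT) : 0 ≤ mass P π σ :=
  Finset.sum_nonneg fun i _ => mul_nonneg (P.lam_pos i).le (h i σ)

lemma xsum_zero_aux {n : ℕ} {A σT : Type*} [Fintype σT] (P : PSetup n A)
    (π : Fin n → σT → ℝ) (h : ∀ i σ, 0 ≤ π i σ) (σ : σT) (h0 : mass P π σ = 0) :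
    ∑ i, P.lam i * π i σ * P.theta i = 0 := by
  unfold mass at h0
  rw [Finset.sum_eq_zero_iff_of_nonneg
    (fun i _ => mul_nonneg (P.lam_pos i).le (h i σ))] at h0
  refine Finset.sum_eq_zero fun i hi => ?_
  rw [h0 i hi, zero_mul]

lemma jensen_aux_s17 {ι : Type*} (s : Finset ι) (m b : ι → ℝ) (t : ℝ) (ht : 1 ≤ t)
    (hm : ∀ i ∈ s, 0 ≤ m i) (hb : ∀ i ∈ s, m i = 0 → b i = 0) :
    (∑ i ∈ s, m i) * |(∑ i ∈ s, b i) / ∑ i ∈ s, m i| ^ t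
      ≤ ∑ i ∈ s, m i * |b i / m i| ^ t := by
  rcases (Finset.sum_nonneg hm).eq_or_lt with h0 | hpos
  · rw [← h0, zero_mul]
    exact Finset.sum_nonneg fun i hi =>
      mul_nonneg (hm i hi) (Real.rpow_nonneg (abs_nonneg _) _)
  · have h1 : |(∑ i ∈ s, b i) / ∑ i ∈ s, m i|
        ≤ ∑ i ∈ s, (m i / ∑ j ∈ s, m j) * |b i / m i| := by
      rw [abs_div, abs_of_pos hpos]
      have : ∑ i ∈ s, (m i / ∑ j ∈ s, m j) * |b i / m i|
          = (∑ i ∈ s, |b i|) / ∑ j ∈ s, m j := by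
        rw [Finset.sum_div]
        refine Finset.sum_congr rfl fun i hi => ?_
        rcases (hm i hi).eq_or_lt with h | h
        · rw [← h, hb i hi h.symm]; simp
        · rw [abs_div, abs_of_pos h]; field_simp
      rw [this]
      exact div_le_div_of_nonneg_right (Finset.abs_sum_le_sum_abs _ _) hpos.le
    have h2 := Real.rpow_arith_mean_le_arith_mean_rpow s (fun i => m i / ∑ j ∈ s, m j)
      (fun i => |b i / m i|) (fun i hi => div_nonneg (hm i hi) hpos.le)
      (by rw [← Finset.sum_div]; exact div_self hpos.ne') (fun i _ => abs_nonneg _) ht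
    have h3 := (Real.rpow_le_rpow (abs_nonneg _) h1 (by linarith : (0:ℝ) ≤ t)).trans h2
    have h4 := mul_le_mul_of_nonneg_left h3 hpos.le
    refine h4.trans (le_of_eq ?_)
    rw [Finset.mul_sum]
    refine Finset.sum_congr rfl fun i _ => ?_
    field_simp

lemma BR_iff_aux {n : ℕ} {A σT : Type*} [Fintype σT] (P : PSetup n A)
    (π : Fin n → σT → ℝ) (b : σT → ℝ) (h : ∀ i σ, 0 ≤ π i σ) (t ε : ℝ) (ht : 1 ≤ t)
    (hε : 0 ≤ ε) : BRconstraint P t ε π b ↔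
      (∑ a, mass P π a * |b a / mass P π a| ^ t) ≤ ε ^ t := by
  unfold BRconstraint
  rw [one_div]
  exact Real.rpow_inv_le_iff_of_pos (Finset.sum_nonneg fun σ _ =>
    mul_nonneg (mass_nonneg_aux P π h σ) (Real.rpow_nonneg (abs_nonneg _) _)) hε (by linarith)

lemma forward_aux {n : ℕ} {A : Type*} [Fintype A]
    (P : PSetup n A) (t ε : ℝ) (ht : 1 ≤ t) (hε : 0 ≤ ε) (k : ℕ) (π : Fin n → Fin k → ℝ)
    (b : Fin k → ℝ) (astar : Fin k → A) (hV : ValidStrategy P π b)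
    (hB : BestResponse P π b astar) (hR : BRconstraint P t ε π b) :
    ∃ (π' : Fin n → A → ℝ) (b' : A → ℝ), PActRecFeasible P t ε π' b' ∧
          senderPayoff P π astar = ∑ i, P.lam i * ∑ a, π' i a * P.u a i := by
  classical
  obtain ⟨h0, h1, h2⟩ := hV
  rw [BR_iff_aux P π b h0 t ε ht hε] at hR
  set m : Fin k → ℝ := fun σ => mass P π σ with hm
  have hm0 : ∀ σ, 0 ≤ m σ := mass_nonneg_aux P π h0
  set b0 : Fin k → ℝ := fun σ => if m σ = 0 then 0 else b σ with hb0
  set x : Fin k → ℝ := fun σ => b0 σ + ∑ i, P.lam i * π i σ * P.theta i with hx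
  have key : ∀ σ, x σ = m σ * belief P π b σ := by
    intro σ
    by_cases h : m σ = 0
    · simp only [hx, hb0, h, if_true, zero_mul, zero_add]
      exact xsum_zero_aux P π h0 σ h
    · simp only [hx, hb0, h, if_false, belief]
      have h' : mass P π σ ≠ 0 := h
      simp only [hm]
      field_simp
  have hx0 : ∀ σ, 0 ≤ x σ := by
    intro σ
    rw [key]
    rcases (hm0 σ).eq_or_lt with h | h
    · rw [← h, zero_mul]
    · exact mul_nonneg h.le (h2 σ h).1
  have hx1 : ∀ σ, x σ ≤ m σ := by
    intro σ
    rw [key]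
    rcases (hm0 σ).eq_or_lt with h | h
    · rw [← h, zero_mul]
    · exact mul_le_of_le_one_right h.le (h2 σ h).2
  have hic : ∀ σ a', x σ * P.v1 a' + (m σ - x σ) * P.v0 a' ≤
      x σ * P.v1 (astar σ) + (m σ - x σ) * P.v0 (astar σ) := by
    intro σ a'
    rw [key]
    rcases (hm0 σ).eq_or_lt with h | h
    · rw [← h]; simp
    · have := mul_le_mul_of_nonneg_left (hB σ h a') h.le
      unfold rcvU at this
      linarith
  have eM : ∀ a, mass P (fun i a => ∑ σ with astar σ = a, π i σ) a
      = ∑ σ with astar σ = a, m σ := by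
    intro a
    simp only [mass, hm, Finset.mul_sum]
    exact Finset.sum_comm
  have eX : ∀ a, (∑ σ with astar σ = a, b0 σ) +
      ∑ i, P.lam i * (∑ σ with astar σ = a, π i σ) * P.theta i
      = ∑ σ with astar σ = a, x σ := by
    intro a
    simp only [hx, Finset.sum_add_distrib, Finset.mul_sum, Finset.sum_mul]
    rw [Finset.sum_comm]
  refine ⟨fun i a => ∑ σ with astar σ = a, π i σ, fun a => ∑ σ with astar σ = a, b0 σ,
    ⟨?_, ?_, ?_, ?_, ?_, ?_, ?_⟩, ?_⟩
  · exact fun i a => Finset.sum_nonneg fun σ _ => h0 i σ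
  · intro i
    rw [← h1 i]
    exact Finset.sum_fiberwise _ _ _
  · intro a ha
    rw [eM, Finset.sum_eq_zero_iff_of_nonneg (fun σ _ => hm0 σ)] at ha
    exact Finset.sum_eq_zero fun σ hσ => if_pos (ha σ hσ)
  · refine le_trans ?_ hR
    rw [← Finset.sum_fiberwise Finset.univ astar]
    refine Finset.sum_le_sum fun a _ => ?_
    rw [eM]
    refine (jensen_aux_s17 _ m b0 t ht (fun σ _ => hm0 σ) (fun σ _ h => if_pos h)).trans
      (le_of_eq ?_)
    refine Finset.sum_congr rfl fun σ _ => ?_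
    by_cases h : m σ = 0
    · have h' : mass P π σ = 0 := h
      rw [h, h']; simp
    · simp only [hb0, h, if_false]; rfl
  · intro a
    simp only [eX]
    exact Finset.sum_nonneg fun σ _ => hx0 σ
  · intro a
    simp only [eX, eM]
    exact Finset.sum_le_sum fun σ _ => hx1 σ
  · intro a a'
    simp only [eX, eM, ← Finset.sum_sub_distrib, Finset.sum_mul, ← Finset.sum_add_distrib]
    refine Finset.sum_le_sum fun σ hσ => ?_
    have := hic σ a'
    rw [(Finset.mem_filter.1 hσ).2] at this
    exact this
  · unfold senderPayoff
    refine Finset.sum_congr rfl fun i _ => ?_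
    congr 1
    rw [← Finset.sum_fiberwise Finset.univ astar]
    refine Finset.sum_congr rfl fun a _ => ?_
    rw [Finset.sum_mul]
    refine Finset.sum_congr rfl fun σ hσ => ?_
    rw [(Finset.mem_filter.1 hσ).2]

lemma backward_aux {n : ℕ} {A : Type*} [Fintype A]
    (P : PSetup n A) (t ε : ℝ) (ht : 1 ≤ t) (hε : 0 ≤ ε) (π : Fin n → A → ℝ)
    (b : A → ℝ) (hF : PActRecFeasible P t ε π b) :
    ∃ (k : ℕ) (π' : Fin n → Fin k → ℝ) (b' : Fin k → ℝ) (astar : Fin k → A),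
        ValidStrategy P π' b' ∧ BestResponse P π' b' astar ∧ BRconstraint P t ε π' b' ∧
          ∑ i, P.lam i * ∑ a, π i a * P.u a i = senderPayoff P π' astar := by
  obtain ⟨h0, h1, _, hR, hx0, hx1, hic⟩ := hF
  let e : Fin (Fintype.card A) ≃ A := (Fintype.equivFin A).symm
  have eM : ∀ σ, mass P (fun i σ => π i (e σ)) σ = mass P π (e σ) := fun _ => rfl
  have eB : ∀ σ, belief P (fun i σ => π i (e σ)) (fun σ => b (e σ)) σ
    = (b (e σ) + ∑ i, P.lam i * π i (e σ) * P.theta i) / mass P π (e σ) := fun _ => rfl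
  refine ⟨Fintype.card A, fun i σ => π i (e σ), fun σ => b (e σ), e,
    ⟨fun i σ => h0 i _, fun i => ?_, fun σ hσ => ?_⟩, fun σ hσ a => ?_, ?_, ?_⟩
  · rw [← h1 i]; exact e.sum_comp (π i)
  · rw [eM] at hσ
    rw [eB]
    exact ⟨div_nonneg (hx0 _) hσ.le, (div_le_one hσ).2 (hx1 _)⟩
  · rw [eM] at hσ
    rw [eB]
    have h := hic (e σ) a
    unfold rcvU
    generalize (b (e σ) + ∑ i, P.lam i * π i (e σ) * P.theta i) = x at *
    generalize mass P π (e σ) = m at *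
    have h' := div_le_div_of_nonneg_right h hσ.le
    have hne := hσ.ne'
    have E : ∀ c d : ℝ, (x * c + (m - x) * d) / m = x / m * c + (1 - x / m) * d := by
      intro c d; field_simp
    rwa [E, E] at h'
  · rw [BR_iff_aux P _ _ (fun i σ => h0 i _) t ε ht hε]
    refine le_trans (le_of_eq ?_) hR
    exact e.sum_comp (fun a => mass P π a * |b a / mass P π a| ^ t)
  · unfold senderPayoff
    refine Finset.sum_congr rfl fun i _ => ?_
    congr 1
    exact (e.sum_comp (fun a => π i a * P.u a i)).symm

/-- The supremum of the sender's payoff over all valid strategies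
with best-response receiver selections on arbitrary finite signal sets, subject to the
bounded-rationality constraint, equals the optimal value of the action-recommendation
program P-ActRec. -/
theorem statement17 {n : ℕ} {A : Type*} [Fintype A]
    (P : PSetup n A) (t ε : ℝ) (ht : 1 ≤ t) (hε : 0 ≤ ε) :
    sSup {v | ∃ (k : ℕ) (π : Fin n → Fin k → ℝ) (b : Fin k → ℝ) (astar : Fin k → A),
        ValidStrategy P π b ∧ BestResponse P π b astar ∧ BRconstraint P t ε π b ∧
          v = senderPayoff P π astar}
      = sSup {v | ∃ (π : Fin n → A → ℝ) (b : A → ℝ), PActRecFeasible P t ε π b ∧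
          v = ∑ i, P.lam i * ∑ a, π i a * P.u a i} := by
  congr 1
  ext v
  constructor
  · rintro ⟨k, π, b, astar, hV, hB, hR, rfl⟩
    exact forward_aux P t ε ht hε k π b astar hV hB hR
  · rintro ⟨π, b, hF, rfl⟩
    exact backward_aux P t ε ht hε π b hF


end PersuasiveCalibration
end
end
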